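/- Every 3-chromatic 2K2-free finite simple graph G on n vertices is recolourable; moreover, for every ℓ ≥ χ(G)+1 = 4, any two ℓ-colourings of G are joined in the reconfiguration graph R_ℓ(G) by a path of length at most 14n (so the ℓ-recolouring diameter of G is at most 14n). -/

import Mathlib

/-- A graph is `2K₂`-free if it has no induced subgraph isomorphic to `2K₂`
(two vertex-disjoint edges with no edges between them). -/
def TwoK2Free {V : Type*} (G : SimpleGraph V) : Prop :=
  ¬ ∃ a b c d : V, G.Adj a b ∧ G.Adj c d ∧
      ¬ G.Adj a c ∧ ¬ G.Adj a d ∧ ¬ G.Adj b c ∧ ¬ G.Adj b d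

/-- The reconfiguration graph `R_ℓ(G)` of the `ℓ`-colourings of `G`: vertices are the
proper `ℓ`-colourings of `G`, two colourings being adjacent when they differ in colour
on exactly one vertex. -/
def recolGraph {V : Type*} (G : SimpleGraph V) (ℓ : ℕ) : SimpleGraph (G.Coloring (Fin ℓ)) where
  Adj c₁ c₂ := ∃! v : V, c₁ v ≠ c₂ v
  symm := by
    refine ⟨?_⟩
    rintro c₁ c₂ ⟨v, hv, hu⟩
    exact ⟨v, hv.symm, fun w hw => hu w hw.symm⟩
  loopless := by
    refine ⟨?_⟩
    rintro c ⟨v, hv, -⟩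
    exact hv rfl

/-!
Fix a reference 3-colouring `p`. In a 2K₂-free graph the neighbourhoods, inside one colour class, of
the vertices of another are nested. Hence, for any colours `i ≠ j`, some class of `p` contains no
`i`-coloured vertex with a `j`-coloured neighbour, and that part of colour `i` can be moved to
colour `j`. Moving a part of every other colour to one fixed colour, and then a part of that colour
back, makes each colour miss some class of `p`, after each vertex has been recoloured at most twice.
Two of the at least four colours then miss the same class, and with their help `p` itself is
reached, up to renaming of its colours, by recolouring each vertex at most once more. Finally, two
renamings of `p` are joined by recolouring whole classes; treating the largest class first, every
class pays for at most two such steps. In total `3n + 2n + 3n` steps suffice.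
-/

section

open Finset

variable {V α β : Type*} {G : SimpleGraph V} {ℓ : ℕ}

lemma edist_le_natCast_add {u v w : V} {m n : ℕ} (huv : G.edist u v ≤ m) (hvw : G.edist v w ≤ n) :
    G.edist u w ≤ (m + n : ℕ) := by
  push_cast
  exact G.edist_triangle.trans (add_le_add huv hvw)

lemma edist_recolGraph_le_one {c d : G.Coloring (Fin ℓ)} (a : V) (h : ∀ v ≠ a, c v = d v) :
    (recolGraph G ℓ).edist c d ≤ 1 := by
  rw [SimpleGraph.edist_le_one_iff_adj_or_eq]
  by_cases ha : c a = d a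
  · refine Or.inr (DFunLike.ext c d fun v => ?_)
    rcases eq_or_ne v a with rfl | hv
    exacts [ha, h v hv]
  · exact Or.inl ⟨a, ha, fun v hv => of_not_not fun hva => hv (h v hva)⟩

-- The adjacency hypothesis makes every mixture of `c` and `d` a proper colouring.
lemma edist_recolGraph_le_card {c d : G.Coloring (Fin ℓ)} {T : Finset V}
    (hadj : ∀ u v, G.Adj u v → c u ≠ d v) (heq : ∀ v ∉ T, c v = d v) :
    (recolGraph G ℓ).edist c d ≤ #T := by
  classical
  induction T using Finset.induction_on generalizing c with
  | empty => simp [DFunLike.ext c d fun v => heq v (notMem_empty v)]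
  | insert a T ha ih =>
    let c' : G.Coloring (Fin ℓ) := .mk (Function.update c a (d a)) fun {u v} huv => by
      have := huv.ne
      have := hadj u v huv
      have := hadj v u huv.symm
      have := c.valid huv
      grind [Function.update_apply]
    have hc' : ∀ v, c' v = if v = a then d a else c v := Function.update_apply c a (d a)
    have hcc' : (recolGraph G ℓ).edist c c' ≤ (1 : ℕ) :=
      edist_recolGraph_le_one a fun v hv => by rw [hc', if_neg hv]
    have hc'd : (recolGraph G ℓ).edist c' d ≤ #T := by
      refine ih (fun u v huv => ?_) fun v hv => ?_
      · have := d.valid huv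
        grind
      · grind
    rw [card_insert_of_notMem ha, add_comm]
    exact edist_le_natCast_add hcc' hc'd

lemma exists_recolor [Fintype V] (c : G.Coloring (Fin ℓ)) (T : V → Prop) [DecidablePred T]
    (j : Fin ℓ) (hT : ∀ u v, T u → T v → ¬G.Adj u v)
    (hj : ∀ u v, T u → G.Adj u v → c v ≠ j) :
    ∃ d : G.Coloring (Fin ℓ), (∀ v, d v = if T v then j else c v) ∧
      (recolGraph G ℓ).edist c d ≤ #{v | T v ∧ c v ≠ j} := by
  let d : G.Coloring (Fin ℓ) := .mk (fun v => if T v then j else c v) fun {u v} huv => by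
    have := hT u v
    have := hj u v
    have := hj v u
    have := c.valid huv
    grind [SimpleGraph.Adj.symm]
  have hd : ∀ v, d v = if T v then j else c v := fun v => rfl
  refine ⟨d, hd, edist_recolGraph_le_card (fun u v huv => ?_) fun v hv => ?_⟩
  · have := hj v u
    have := c.valid huv
    grind [SimpleGraph.Adj.symm]
  · grind

/-- Colour `i` of the colouring `c` does not occur on class `a` of the reference colouring `p`. -/
def Avoids (p : G.Coloring α) (c : G.Coloring β) (i : β) (a : α) : Prop :=
  ∀ v, p v = a → c v ≠ i

-- Take a `u` of colour `i` whose neighbourhood in colour `j` is minimal among the nonempty ones,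
-- and the class of a `w` in that neighbourhood: by 2K₂-freeness, a bad vertex of this class would
-- have a smaller neighbourhood, as it is not adjacent to `w`.
lemma TwoK2Free.exists_class_forall_not_adj [Finite V] [Nontrivial α] (hG : TwoK2Free G)
    (p : G.Coloring α) (c : G.Coloring β) (i j : β) (b : α) :
    ∃ a, (Avoids p c j b → a ≠ b) ∧ ∀ u v, p u = a → c u = i → c v = j → ¬G.Adj u v := by
  let N (u : V) : Set V := {v | c v = j ∧ G.Adj u v}
  by_cases hex : ∃ u, c u = i ∧ (N u).Nonempty
  · obtain ⟨u, ⟨hu, w, hwj, huw⟩, hmin⟩ :=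
      exists_minimalFor_of_wellFoundedLT (fun u => c u = i ∧ (N u).Nonempty) N hex
    refine ⟨p w, fun hb hwb => hb w hwb hwj, fun u' v hu'w hu' hv hu'v => ?_⟩
    have hu'w : ¬G.Adj u' w := fun h => p.valid h hu'w
    have hsub : N u' ⊆ N u := by
      rintro x ⟨hx, hu'x⟩
      by_contra hux
      exact hG ⟨u, w, u', x, huw, hu'x, fun h => c.valid h (hu.trans hu'.symm),
        fun h => hux ⟨hx, h⟩, fun h => hu'w h.symm, fun h => c.valid h (hwj.trans hx.symm)⟩
    exact hu'w (hmin ⟨hu', v, hv, hu'v⟩ hsub ⟨hwj, huw⟩).2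
  · obtain ⟨a, ha⟩ := exists_ne b
    exact ⟨a, fun _ => ha, fun u v _ hu hv huv => hex ⟨u, hu, v, hv, huv⟩⟩

variable [Fintype V]

lemma TwoK2Free.exists_recolor_part [Nontrivial α] [DecidableEq α] (hG : TwoK2Free G)
    (p : G.Coloring α) (c : G.Coloring (Fin ℓ)) (i j : Fin ℓ) (b : α) :
    ∃ (a : α) (d : G.Coloring (Fin ℓ)), (Avoids p c j b → a ≠ b) ∧
      (∀ v, d v = if p v = a ∧ c v = i then j else c v) ∧
      (recolGraph G ℓ).edist c d ≤ #{v | p v = a ∧ c v = i} := by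
  obtain ⟨a, hab, ha⟩ := hG.exists_class_forall_not_adj p c i j b
  obtain ⟨d, hd, hcd⟩ := exists_recolor c (fun v => p v = a ∧ c v = i) j
    (fun u v hu hv huv => p.valid huv (hu.1.trans hv.1.symm))
    (fun u v hu huv hv => ha u v hu.1 hu.2 hv huv)
  exact ⟨a, d, hab, hd, hcd.trans <|
    Nat.cast_le.mpr <| card_le_card <| monotone_filter_right univ fun _ _ hv => hv.1⟩

lemma exists_recolor_class [DecidableEq α] (p : G.Coloring α) (c : G.Coloring (Fin ℓ))
    (a : α) (k : Fin ℓ) (hk : ∀ b ≠ a, Avoids p c k b) :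
    ∃ d : G.Coloring (Fin ℓ), (∀ v, d v = if p v = a then k else c v) ∧
      (recolGraph G ℓ).edist c d ≤ #{v | p v = a ∧ c v ≠ k} :=
  exists_recolor c (fun v => p v = a) k (fun _ _ hu hv huv => p.valid huv (hu.trans hv.symm))
    fun _ v hu huv => hk (p v) (fun hv => p.valid huv (hu.trans hv.symm)) v rfl

lemma TwoK2Free.exists_forall_mem_avoids [Nontrivial α] (hG : TwoK2Free G) (p : G.Coloring α)
    (c : G.Coloring (Fin ℓ)) (j : Fin ℓ) (s : Finset (Fin ℓ)) (hj : j ∉ s) :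
    ∃ d : G.Coloring (Fin ℓ), (∀ v, d v = c v ∨ c v ∈ s ∧ d v = j) ∧
      (∀ i ∈ s, ∃ a, Avoids p d i a) ∧ (recolGraph G ℓ).edist c d ≤ #{v | c v ∈ s} := by
  classical
  induction s using Finset.induction_on with
  | empty => exact ⟨c, by simp, by simp, by simp⟩
  | insert i s hi ih =>
    obtain ⟨d, hd, hs, hcd⟩ := ih (by grind)
    obtain ⟨b⟩ := Nontrivial.to_nonempty (α := α)
    obtain ⟨a, e, -, he, hde⟩ := hG.exists_recolor_part p d i j b
    have hia : Avoids p e i a := by grind [Avoids]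
    refine ⟨e, by grind, fun k hk => ?_, (edist_le_natCast_add hcd hde).trans ?_⟩
    · rcases mem_insert.mp hk with rfl | hk
      · exact ⟨a, hia⟩
      · obtain ⟨a', ha'⟩ := hs k hk
        exact ⟨a', by grind [Avoids]⟩
    · norm_cast
      simp only [card_filter, ← sum_add_distrib]
      exact sum_le_sum fun v _ => by grind

lemma TwoK2Free.exists_forall_avoids [Nontrivial α] (hG : TwoK2Free G) (hℓ : 2 ≤ ℓ)
    (p : G.Coloring α) (c : G.Coloring (Fin ℓ)) :
    ∃ d : G.Coloring (Fin ℓ), (∀ i, ∃ a, Avoids p d i a) ∧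
      (recolGraph G ℓ).edist c d ≤ (2 * Fintype.card V : ℕ) := by
  classical
  have : Nontrivial (Fin ℓ) := Fin.nontrivial_iff_two_le.mpr hℓ
  obtain ⟨i, j, hij⟩ := exists_pair_ne (Fin ℓ)
  obtain ⟨d, -, hd, hcd⟩ := hG.exists_forall_mem_avoids p c j (univ.erase j) (by simp)
  obtain ⟨b, hb⟩ := hd i (by simp [hij])
  obtain ⟨a, e, hab, he, hde⟩ := hG.exists_recolor_part p d j i b
  have hja : Avoids p e j a := by grind [Avoids]
  have hib : Avoids p e i b := by grind [Avoids]
  refine ⟨e, fun k => ?_, (edist_le_natCast_add hcd hde).trans ?_⟩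
  · rcases eq_or_ne k j with rfl | hkj
    · exact ⟨a, hja⟩
    rcases eq_or_ne k i with rfl | hki
    · exact ⟨b, hib⟩
    obtain ⟨a', ha'⟩ := hd k (by simp [hkj])
    exact ⟨a', by grind [Avoids]⟩
  · rw [two_mul]
    gcongr <;> exact card_le_univ _

-- Here `X` loses colour `i`, which is then free for all of `Y`; next `j` is free for `X`.
lemma TwoK2Free.exists_edist_recolorOfEmbedding_le_of_avoids (hG : TwoK2Free G) (hℓ : 3 ≤ ℓ)
    (p : G.Coloring (Fin 3)) (c : G.Coloring (Fin ℓ)) {i j : Fin ℓ} (hij : i ≠ j) {W : Fin 3}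
    (hi : Avoids p c i W) (hj : Avoids p c j W) :
    ∃ g : Fin 3 ↪ Fin ℓ,
      (recolGraph G ℓ).edist c (G.recolorOfEmbedding g p) ≤ Fintype.card V := by
  obtain ⟨X, c₁, hX, hc₁, h₁⟩ := hG.exists_recolor_part p c i j W
  obtain ⟨Y, hYW, hYX, hcover⟩ : ∃ Y, Y ≠ W ∧ Y ≠ X ∧ ∀ a, a = W ∨ a = X ∨ a = Y :=
    (by decide : ∀ W X : Fin 3, X ≠ W → ∃ Y, Y ≠ W ∧ Y ≠ X ∧ ∀ a, a = W ∨ a = X ∨ a = Y)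
      W X (hX hj)
  obtain ⟨k, hki, hkj⟩ : ∃ k : Fin ℓ, k ≠ i ∧ k ≠ j :=
    Fin.exists_ne_and_ne_of_two_lt i j (by lia)
  have hY : ∀ b ≠ Y, Avoids p c₁ i b := fun b hbY v hv => by
    rcases hcover b with rfl | rfl | rfl <;> grind [Avoids]
  obtain ⟨c₂, hc₂, h₂⟩ := exists_recolor_class p c₁ Y i hY
  have hX : ∀ b ≠ X, Avoids p c₂ j b := fun b hbX v hv => by
    rcases hcover b with rfl | rfl | rfl <;> grind [Avoids]
  obtain ⟨c₃, hc₃, h₃⟩ := exists_recolor_class p c₂ X j hX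
  have hW : ∀ b ≠ W, Avoids p c₃ k b := fun b hbW v hv => by
    rcases hcover b with rfl | rfl | rfl <;> grind
  obtain ⟨c₄, hc₄, h₄⟩ := exists_recolor_class p c₃ W k hW
  let g : Fin 3 ↪ Fin ℓ := ⟨fun a => if a = W then k else if a = X then j else i, by
    intro a b
    rcases hcover a with rfl | rfl | rfl <;> rcases hcover b with rfl | rfl | rfl <;> grind⟩
  have hg : G.recolorOfEmbedding g p = c₄ := by
    refine DFunLike.ext _ _ fun v => ?_
    change (if p v = W then k else if p v = X then j else i) = c₄ v
    rcases hcover (p v) with hv | hv | hv <;> grind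
  refine ⟨g, hg ▸ (edist_le_natCast_add (edist_le_natCast_add (edist_le_natCast_add h₁ h₂) h₃)
    h₄).trans ?_⟩
  norm_cast
  simp only [card_filter, ← sum_add_distrib, Fintype.card_eq_sum_ones]
  exact sum_le_sum fun v _ => by grind

lemma TwoK2Free.exists_edist_recolorOfEmbedding_le (hG : TwoK2Free G) (hℓ : 4 ≤ ℓ)
    (p : G.Coloring (Fin 3)) (c : G.Coloring (Fin ℓ)) :
    ∃ g : Fin 3 ↪ Fin ℓ,
      (recolGraph G ℓ).edist c (G.recolorOfEmbedding g p) ≤ (3 * Fintype.card V : ℕ) := by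
  obtain ⟨d, hd, hcd⟩ := hG.exists_forall_avoids (by lia) p c
  choose f hf using hd
  obtain ⟨i, j, hij, hfij⟩ := Fintype.exists_ne_map_eq_of_card_lt f (by simpa)
  obtain ⟨g, hg⟩ := hG.exists_edist_recolorOfEmbedding_le_of_avoids (by lia) p d hij (hf i)
    (hfij ▸ hf j)
  exact ⟨g, (edist_le_natCast_add hcd hg).trans (by norm_cast; lia)⟩

lemma edist_recolorOfEmbedding_setValue_le [DecidableEq α] (p : G.Coloring α)
    (g : α ↪ Fin ℓ) (a : α) (k : Fin ℓ) (hk : ∀ b ≠ a, g b ≠ k) :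
    (recolGraph G ℓ).edist (G.recolorOfEmbedding g p) (G.recolorOfEmbedding (g.setValue a k) p) ≤
      #{v | p v = a} := by
  have hset : ∀ b ≠ a, g.setValue a k b = g b := fun b hb =>
    Function.Embedding.setValue_eq_of_ne hb (hk b hb)
  refine edist_recolGraph_le_card (fun u v huv => ?_) fun v hv => ?_
  · change g (p u) ≠ g.setValue a k (p v)
    have huv := p.valid huv
    by_cases hv : p v = a
    · rw [hv, Function.Embedding.setValue_eq]
      exact hk _ (hv ▸ huv)
    · rw [hset _ hv]
      exact g.injective.ne huv
  · exact (hset (p v) (by simpa using hv)).symm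

lemma exists_vacate_color [Fintype α] [DecidableEq α] (p : G.Coloring α)
    (hα : Fintype.card α < ℓ) (g : α ↪ Fin ℓ) (b : α) :
    ∃ h : α ↪ Fin ℓ, (∀ x, h x ≠ g b) ∧ (∀ x ≠ b, h x = g x) ∧
      (recolGraph G ℓ).edist (G.recolorOfEmbedding g p) (G.recolorOfEmbedding h p) ≤
        #{v | p v = b} := by
  have hsurj : ¬Function.Surjective g := fun h =>
    (Fintype.card_le_of_surjective g h).not_gt (by simpa)
  obtain ⟨f, hf⟩ : ∃ f, ∀ x, g x ≠ f := by simpa [Function.Surjective] using hsurj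
  have hne : ∀ x ≠ b, g.setValue b f x = g x := fun x hx =>
    Function.Embedding.setValue_eq_of_ne hx (hf x)
  refine ⟨g.setValue b f, fun x => ?_, hne,
    edist_recolorOfEmbedding_setValue_le p g b f fun x _ => hf x⟩
  rcases eq_or_ne x b with rfl | hx
  · rw [Function.Embedding.setValue_eq]
    exact (hf x).symm
  · rw [hne x hx]
    exact g.injective.ne hx

-- A smaller class that occupies the target colour of `a` is first moved out of the way.
lemma exists_settle_class [Fintype α] [DecidableEq α] (p : G.Coloring α)
    (hα : Fintype.card α < ℓ) (g g' : α ↪ Fin ℓ) {a : α} {s : Finset α}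
    (hs : ∀ b ∈ s, #{v | p v = b} ≤ #{v | p v = a}) (hgg' : ∀ b ∉ insert a s, g b = g' b) :
    ∃ h : α ↪ Fin ℓ, (∀ b ∉ s, h b = g' b) ∧
      (recolGraph G ℓ).edist (G.recolorOfEmbedding g p) (G.recolorOfEmbedding h p) ≤
        (2 * #{v | p v = a} : ℕ) := by
  obtain ⟨g₀, hfree, hg₀, hgg₀⟩ : ∃ g₀ : α ↪ Fin ℓ, (∀ b ≠ a, g₀ b ≠ g' a) ∧
      (∀ b ∉ insert a s, g₀ b = g' b) ∧ (recolGraph G ℓ).edist (G.recolorOfEmbedding g p)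
        (G.recolorOfEmbedding g₀ p) ≤ #{v | p v = a} := by
    by_cases hused : ∃ b ≠ a, g b = g' a
    · obtain ⟨b, hba, hb⟩ := hused
      have hbs : b ∈ s := by
        by_contra hbs
        exact hba (g'.injective (hgg' b (by simp [hba, hbs]) ▸ hb))
      obtain ⟨g₀, hvacant, hne, hgg₀⟩ := exists_vacate_color p hα g b
      refine ⟨g₀, fun x _ => hb ▸ hvacant x, fun x hx => ?_,
        hgg₀.trans (Nat.cast_le.mpr (hs b hbs))⟩
      rw [hne x fun hxb => hx (by simp [hxb, hbs]), hgg' x hx]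
    · exact ⟨g, by simpa using hused, hgg', by simp⟩
  refine ⟨g₀.setValue a (g' a), fun b hb => ?_, (edist_le_natCast_add hgg₀
    (edist_recolorOfEmbedding_setValue_le p g₀ a (g' a) hfree)).trans_eq (by rw [two_mul])⟩
  rcases eq_or_ne b a with rfl | hba
  · exact Function.Embedding.setValue_eq ..
  · rw [Function.Embedding.setValue_eq_of_ne hba (hfree b hba), hg₀ b (by simp [hba, hb])]

lemma edist_recolorOfEmbedding_le_sum [Fintype α] [DecidableEq α] (p : G.Coloring α)
    (hα : Fintype.card α < ℓ) (g g' : α ↪ Fin ℓ) (s : Finset α) (hgg' : ∀ a ∉ s, g a = g' a) :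
    (recolGraph G ℓ).edist (G.recolorOfEmbedding g p) (G.recolorOfEmbedding g' p) ≤
      (2 * ∑ a ∈ s, #{v | p v = a} : ℕ) := by
  induction s using Finset.induction_on_max_value (fun a => #{v | p v = a}) generalizing g with
  | empty => simp [DFunLike.ext g g' fun a => hgg' a (notMem_empty a)]
  | insert a s ha hmax ih =>
    obtain ⟨h, hh, hedist⟩ := exists_settle_class p hα g g' hmax hgg'
    rw [sum_insert ha, mul_add]
    exact edist_le_natCast_add hedist (ih h hh)

lemma edist_recolorOfEmbedding_le [Fintype α] (p : G.Coloring α) (hα : Fintype.card α < ℓ)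
    (g g' : α ↪ Fin ℓ) :
    (recolGraph G ℓ).edist (G.recolorOfEmbedding g p) (G.recolorOfEmbedding g' p) ≤
      (2 * Fintype.card V : ℕ) := by
  classical
  have hcard : Fintype.card V = ∑ a, #{v | p v = a} :=
    card_eq_sum_card_fiberwise (by simp)
  rw [hcard]
  exact edist_recolorOfEmbedding_le_sum p hα g g' univ (by simp)

lemma TwoK2Free.edist_recolGraph_le (hG : TwoK2Free G) (hℓ : 4 ≤ ℓ) (p : G.Coloring (Fin 3))
    (c d : G.Coloring (Fin ℓ)) : (recolGraph G ℓ).edist c d ≤ (8 * Fintype.card V : ℕ) := by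
  obtain ⟨g, hcg⟩ := hG.exists_edist_recolorOfEmbedding_le hℓ p c
  obtain ⟨g', hdg'⟩ := hG.exists_edist_recolorOfEmbedding_le hℓ p d
  rw [SimpleGraph.edist_comm] at hdg'
  have hgg' := edist_recolorOfEmbedding_le p (by simpa) g g'
  exact (edist_le_natCast_add (edist_le_natCast_add hcg hgg') hdg').trans (by norm_cast; lia)

theorem stmt2_general (G : SimpleGraph V) (hcol : G.Colorable 3) (hG : TwoK2Free G) :
    ∀ ℓ : ℕ, 4 ≤ ℓ →
      (recolGraph G ℓ).Connected ∧
      ∀ c₁ c₂ : G.Coloring (Fin ℓ),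
        ∃ p : (recolGraph G ℓ).Walk c₁ c₂, p.length ≤ 8 * Fintype.card V := by
  intro ℓ hℓ
  have ⟨p⟩ := hcol
  have hwalk (c₁ c₂ : G.Coloring (Fin ℓ)) :
      ∃ q : (recolGraph G ℓ).Walk c₁ c₂, q.length ≤ 8 * Fintype.card V := by
    have hle := hG.edist_recolGraph_le hℓ p c₁ c₂
    obtain ⟨q, hq⟩ :=
      SimpleGraph.exists_walk_of_edist_ne_top (ne_top_of_le_ne_top (ENat.natCast_ne_top _) hle)
    exact ⟨q, by rw [← hq] at hle; exact_mod_cast hle⟩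
  have : Nonempty (G.Coloring (Fin ℓ)) := hcol.mono (by lia)
  exact ⟨⟨fun c₁ c₂ => (hwalk c₁ c₂).nonempty⟩, hwalk⟩

end

/-- every 3-chromatic 2K₂-free graph is recolourable, with ℓ-recolouring
diameter at most `14n` for every `ℓ ≥ χ(G) + 1 = 4`. -/
theorem stmt2 {V : Type*} [Fintype V] (G : SimpleGraph V)
    (hchi : G.chromaticNumber = 3) (hG : TwoK2Free G) :
    ∀ ℓ : ℕ, 4 ≤ ℓ →
      (recolGraph G ℓ).Connected ∧
      ∀ c₁ c₂ : G.Coloring (Fin ℓ),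
        ∃ p : (recolGraph G ℓ).Walk c₁ c₂, p.length ≤ 14 * Fintype.card V :=
  fun ℓ hℓ =>
    (stmt2_general G (SimpleGraph.chromaticNumber_le_iff_colorable.mp hchi.le) hG ℓ hℓ).imp_right
      fun hwalk c₁ c₂ => (hwalk c₁ c₂).imp fun _ hp => hp.trans (by lia)
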